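/- arXiv:2409.05776 — 2 statements merged into one kernel-verified Lean document; each statement's English description precedes it below -/
import Mathlib

section
/- Let X = {(z₁,z₂) ∈ ℂ² : |z₁| = |z₂|, |z₁| ≤ 1} and for ε > 0 let V_ε = {(z₁,z₂) : ||z₁| − |z₂|| < ε, |z₁| ≤ 1, |z₂| ≤ 1}. Then for every ε > 0, every function holomorphic on a neighborhood of V_ε extends holomorphically to a neighborhood of the closed bidisc {|z₁| ≤ 1, |z₂| ≤ 1}. In particular the singular Levi-flat hypersurface X, whose boundary is the torus 𝕋 = {|z₁| = |z₂| = 1}, is not a Stein compact (it has no neighborhood basis of Stein open sets). -/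
noncomputable section

/-- The holomorphic hull of a compact `K` inside an open `V ⊆ ℂ²`. -/
def holHull (V K : Set (ℂ × ℂ)) : Set (ℂ × ℂ) :=
  {z ∈ V | ∀ f : ℂ × ℂ → ℂ, DifferentiableOn ℂ f V →
    ∀ c : ℝ, (∀ w ∈ K, ‖f w‖ ≤ c) → ‖f z‖ ≤ c}

/-- An open subset of ℂ² is Stein iff it is holomorphically convex. -/
def IsSteinOpen (V : Set (ℂ × ℂ)) : Prop :=
  IsOpen V ∧ ∀ K : Set (ℂ × ℂ), K ⊆ V → IsCompact K → IsCompact (holHull V K)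

/-- A compact set is a Stein compact if it has a fundamental system of Stein open
neighborhoods. -/
def IsSteinCompact (K : Set (ℂ × ℂ)) : Prop :=
  ∀ U : Set (ℂ × ℂ), IsOpen U → K ⊆ U →
    ∃ V : Set (ℂ × ℂ), IsSteinOpen V ∧ K ⊆ V ∧ V ⊆ U

/-!
A function `f` holomorphic near the cone `X = {|z₁| = |z₂| ≤ 1}` is holomorphic near the dilation
`R X` for some `R > 1`. Expand `f` at the origin into homogeneous polynomials, `f = ∑ Pₙ`. Each
disc `{t v : |t| ≤ R}` with `v ∈ X` lies in `R X`, so the Cauchy estimates give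
`|Pₙ(v)| ≤ C / Rⁿ` for `v ∈ X`. As `X` contains the torus, the maximum principle extends this bound
to the whole bidisc, and by homogeneity `∑ Pₙ` converges on the bidisc of radius `R`.

If `V` is a Stein neighbourhood of `X`, then the hull of `X` in `V` contains the connected component
of `0` in the part of `V` inside the open bidisc. The hull is compact, so this component is
relatively closed and hence is all of the bidisc. Therefore `V` contains the closed bidisc.
-/

section Holomorphic

open Filter Metric Set Topology
open scoped Nat Pointwise

variable {E F : Type*} [NormedAddCommGroup E] [NormedSpace ℂ E]
  [NormedAddCommGroup F] [NormedSpace ℂ F]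

theorem norm_fderiv_le_of_forall_norm_le {f : E → F} {z : E} {r M : ℝ} (hr : 0 < r)
    (hf : DifferentiableOn ℂ f (ball z r)) (hM : ∀ w ∈ ball z r, ‖f w‖ ≤ M) :
    ‖fderiv ℂ f z‖ ≤ 2 * M / r := by
  refine Complex.norm_fderiv_le_div_of_mapsTo_ball hf (fun w hw ↦ ?_) hr
  rw [mem_closedBall, two_mul]
  exact (dist_le_norm_add_norm _ _).trans (add_le_add (hM w hw) (hM z (mem_ball_self hr)))

theorem uniformCauchySeqOn_fderiv_ball {ι : Type*} {l : Filter ι} {f : ι → E → F}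
    {z : E} {r R : ℝ} (hrR : r < R) (hf : ∀ᶠ n in l, DifferentiableOn ℂ (f n) (ball z R))
    (h : UniformCauchySeqOn f l (ball z R)) :
    UniformCauchySeqOn (fun n ↦ fderiv ℂ (f n)) l (ball z r) := by
  have hδ : 0 < R - r := sub_pos.2 hrR
  intro u hu
  obtain ⟨ε, hε, hεu⟩ := mem_uniformity_dist.1 hu
  filter_upwards [h _ (dist_mem_uniformity (ε := ε * (R - r) / 4) (by positivity)),
    hf.prod_mk hf] with n hn hdiff w hw
  have hsub : ball w (R - r) ⊆ ball z R := ball_subset_ball' (by linarith [mem_ball.1 hw])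
  have hmem : ball z R ∈ 𝓝 w := isOpen_ball.mem_nhds (hsub (mem_ball_self hδ))
  refine hεu ?_
  rw [dist_eq_norm,
    ← fderiv_sub (hdiff.1.differentiableAt hmem) (hdiff.2.differentiableAt hmem)]
  calc ‖fderiv ℂ (f n.1 - f n.2) w‖ ≤ 2 * (ε * (R - r) / 4) / (R - r) :=
        norm_fderiv_le_of_forall_norm_le hδ ((hdiff.1.sub hdiff.2).mono hsub)
          fun y hy ↦ by simpa [dist_eq_norm] using (hn y (hsub hy)).le
    _ < ε := by field_simp; linarith

theorem differentiableOn_of_tendstoUniformlyOn [CompleteSpace F] {ι : Type*} {l : Filter ι}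
    [l.NeBot] {f : ι → E → F} {g : E → F} {U : Set E} (hU : IsOpen U)
    (hf : ∀ᶠ n in l, DifferentiableOn ℂ (f n) U) (h : TendstoUniformlyOn f g l U) :
    DifferentiableOn ℂ g U := by
  intro z hz
  obtain ⟨R, hR, hRU⟩ := isOpen_iff.1 hU z hz
  have hnhds : ball z (R / 2) ∈ 𝓝 z := ball_mem_nhds z (half_pos hR)
  have hcauchy := uniformCauchySeqOn_fderiv_ball (half_lt_self hR)
    (hf.mono fun n hn ↦ hn.mono hRU) (h.mono hRU).uniformCauchySeqOn
  choose! g' hg' using fun w hw ↦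
    cauchy_map_iff_exists_tendsto.1 (hcauchy.cauchy_map (x := w) hw)
  have hderiv : TendstoUniformlyOnFilter (fun n ↦ fderiv ℂ (f n)) g' l (𝓝 z) :=
    (hcauchy.tendstoUniformlyOn_of_tendsto hg').tendstoUniformlyOnFilter.mono_right
      (le_principal_iff.2 hnhds)
  refine (hasFDerivAt_of_tendstoUniformlyOnFilter (f := f) hderiv ?_
    ?_).differentiableAt.differentiableWithinAt
  · filter_upwards [hf.prod_mk (hU.eventually_mem hz)] with n hn
    exact (hn.1.differentiableAt (hU.mem_nhds hn.2)).hasFDerivAt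
  · filter_upwards [hU.eventually_mem hz] with w hw using h.tendsto_at hw

theorem eqOn_of_convex_of_eventuallyEq [CompleteSpace F] {f g : E → F} {U : Set E} {y : E}
    (hU : IsOpen U) (hconv : Convex ℝ U) (hf : DifferentiableOn ℂ f U)
    (hg : DifferentiableOn ℂ g U) (hy : y ∈ U) (hfg : f =ᶠ[𝓝 y] g) : EqOn f g U := by
  intro z hz
  let line : ℂ → E := fun t ↦ y + t • (z - y)
  have hline : Differentiable ℂ line := by fun_prop
  have h0 : line 0 = y := by simp [line]
  have h1 : line 1 = z := by simp [line]
  have hanalytic {h : E → F} (hh : DifferentiableOn ℂ h U) :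
      AnalyticOnNhd ℂ (h ∘ line) (line ⁻¹' U) :=
    (hh.comp hline.differentiableOn (mapsTo_preimage _ _)).analyticOnNhd
      (hU.preimage hline.continuous)
  have hgerm : f ∘ line =ᶠ[𝓝 0] g ∘ line :=
    (h0 ▸ hline.continuous.tendsto 0 : Tendsto line (𝓝 0) (𝓝 y)).eventually hfg
  have hpre : IsPreconnected (line ⁻¹' U) :=
    ((hconv.translate_preimage_right y).linear_preimage
      ((LinearMap.toSpanSingleton ℂ E (z - y)).restrictScalars ℝ)).isPreconnected
  simpa [h1] using (hanalytic hf).eqOn_of_preconnected_of_eventuallyEq (hanalytic hg) hpre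
    (by simpa [h0] using hy) hgerm (show (1 : ℂ) ∈ line ⁻¹' U by simpa [h1] using hz)

theorem eqOn_of_isPreconnected_of_eventuallyEq [CompleteSpace F] {f g : E → F} {U : Set E}
    {z₀ : E} (hU : IsOpen U) (hconn : IsPreconnected U) (hf : DifferentiableOn ℂ f U)
    (hg : DifferentiableOn ℂ g U) (h₀ : z₀ ∈ U) (hfg : f =ᶠ[𝓝 z₀] g) : EqOn f g U := by
  have hsub : U ⊆ {z | f =ᶠ[𝓝 z] g} := by
    refine hconn.subset_of_closure_inter_subset isOpen_setOfPred_eventually_nhds ⟨z₀, h₀, hfg⟩ ?_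
    rintro z ⟨hzcl, hzU⟩
    obtain ⟨r, hr, hrU⟩ := isOpen_iff.1 hU z hzU
    obtain ⟨y, hyfg, hyr⟩ := Metric.mem_closure_iff.1 hzcl r hr
    exact (eqOn_of_convex_of_eventuallyEq isOpen_ball (convex_ball z r) (hf.mono hrU)
      (hg.mono hrU) (mem_ball'.2 hyr) hyfg).eventuallyEq_of_mem (ball_mem_nhds z hr)
  exact fun z hz ↦ (hsub hz).eq_of_nhds

theorem iteratedDeriv_comp_const_smul_field {𝕜 G : Type*} [NontriviallyNormedField 𝕜]
    [NormedAddCommGroup G] [NormedSpace 𝕜 G] (n : ℕ) (f : 𝕜 → G) (c : 𝕜) :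
    iteratedDeriv n (fun t ↦ f (c * t)) = fun t ↦ c ^ n • iteratedDeriv n f (c * t) := by
  induction n with
  | zero => simp
  | succ n ih =>
    ext t
    rw [iteratedDeriv_succ, ih, deriv_fun_const_smul_field, deriv_comp_mul_left,
      iteratedDeriv_succ, smul_smul, pow_succ]

/-- The degree `n` part of the expansion of `f` at the origin into homogeneous polynomials, read off
from the Taylor coefficients of `f` on complex lines through the origin. -/
def homogeneousPart (f : E → F) (n : ℕ) (v : E) : F :=
  (n ! : ℂ)⁻¹ • iteratedDeriv n (fun t : ℂ ↦ f (t • v)) 0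

theorem homogeneousPart_smul (f : E → F) (n : ℕ) (c : ℂ) (v : E) :
    homogeneousPart f n (c • v) = c ^ n • homogeneousPart f n v := by
  have hslice : (fun t : ℂ ↦ f (t • c • v)) = fun t ↦ f ((c * t) • v) := by
    ext t; rw [smul_smul, mul_comm]
  have hderiv := congrFun (iteratedDeriv_comp_const_smul_field n (fun t : ℂ ↦ f (t • v)) c) 0
  rw [homogeneousPart, hslice, hderiv, mul_zero, smul_comm, homogeneousPart]

theorem diffContOnCl_comp_smul_const {f : E → F} {U : Set E} {v : E} {R : ℝ}
    (hf : DifferentiableOn ℂ f U) (hv : ∀ t : ℂ, ‖t‖ ≤ R → t • v ∈ U) :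
    DiffContOnCl ℂ (fun t : ℂ ↦ f (t • v)) (ball 0 R) :=
  (hf.comp (by fun_prop : Differentiable ℂ fun t : ℂ ↦ t • v).differentiableOn fun t ht ↦
    hv t (mem_closedBall_zero_iff.1 (closure_ball_subset_closedBall ht))).diffContOnCl

section HomogeneousPart

variable [CompleteSpace F] {f : E → F} {v : E} {R C : ℝ}

theorem hasSum_homogeneousPart (hf : DifferentiableOn ℂ (fun t : ℂ ↦ f (t • v)) (ball 0 R))
    {t : ℂ} (ht : ‖t‖ < R) : HasSum (fun n ↦ t ^ n • homogeneousPart f n v) (f (t • v)) := by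
  simpa [homogeneousPart, smul_comm (t ^ _)] using
    Complex.hasSum_taylorSeries_on_ball hf (mem_ball_zero_iff.2 ht)

theorem norm_homogeneousPart_le (hR : 0 < R)
    (hf : DiffContOnCl ℂ (fun t : ℂ ↦ f (t • v)) (ball 0 R))
    (hC : ∀ t : ℂ, ‖t‖ = R → ‖f (t • v)‖ ≤ C) (n : ℕ) :
    ‖homogeneousPart f n v‖ ≤ C / R ^ n := by
  have hcauchy := Complex.norm_iteratedDeriv_le_of_forall_mem_sphere_norm_le n hR hf
    fun t ht ↦ hC t (mem_sphere_zero_iff_norm.1 ht)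
  rw [homogeneousPart, norm_smul, norm_inv, Complex.norm_natCast,
    inv_mul_le_iff₀ (by positivity)]
  exact hcauchy.trans_eq (mul_div_assoc _ _ _)

theorem norm_sum_homogeneousPart_sub_le (hR : 0 < R)
    (hf : DiffContOnCl ℂ (fun t : ℂ ↦ f (t • v)) (ball 0 R))
    (hC : ∀ t : ℂ, ‖t‖ = R → ‖f (t • v)‖ ≤ C) {t : ℂ} (ht : ‖t‖ < R) (n : ℕ) :
    ‖∑ k ∈ Finset.range n, t ^ k • homogeneousPart f k v - f (t • v)‖ ≤
      C * (‖t‖ / R) ^ n / (1 - ‖t‖ / R) := by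
  refine norm_sub_le_of_geometric_bound_of_hasSum ((div_lt_one hR).2 ht) (fun k ↦ ?_)
    (hasSum_homogeneousPart hf.differentiableOn ht) n
  calc ‖t ^ k • homogeneousPart f k v‖ ≤ ‖t‖ ^ k * (C / R ^ k) := by
        rw [norm_smul, norm_pow]
        gcongr
        exact norm_homogeneousPart_le hR hf hC k
    _ = C * (‖t‖ / R) ^ k := by rw [div_pow]; ring

theorem tendstoUniformlyOn_homogeneousPart {s : ℝ} (hf : DifferentiableOn ℂ f (ball 0 s))
    (hC : ∀ z ∈ ball 0 s, ‖f z‖ ≤ C) (n : ℕ) :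
    TendstoUniformlyOn
      (fun (t : ℂ) v ↦
        (t ^ n)⁻¹ • (f (t • v) - ∑ k ∈ Finset.range n, t ^ k • homogeneousPart f k v))
      (homogeneousPart f n) (𝓝[≠] 0) (ball 0 s) := by
  rw [Metric.tendstoUniformlyOn_iff]
  intro ε hε
  have hlim : Tendsto (fun t : ℂ ↦ C * ‖t‖ / (1 - ‖t‖)) (𝓝 0) (𝓝 0) := by
    have : ContinuousAt (fun t : ℂ ↦ C * ‖t‖ / (1 - ‖t‖)) 0 :=
      ContinuousAt.div (by fun_prop) (by fun_prop) (by simp)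
    simpa [ContinuousAt] using this
  filter_upwards [self_mem_nhdsWithin, nhdsWithin_le_nhds (hlim.eventually_lt_const hε),
    nhdsWithin_le_nhds (ball_mem_nhds (0 : ℂ) one_pos)] with t ht0 htε ht1 v hv
  have htn : t ^ n ≠ 0 := pow_ne_zero n ht0
  have hdisc (t : ℂ) (ht : ‖t‖ ≤ 1) : t • v ∈ ball 0 s := balanced_ball_zero.smul_mem ht hv
  have htail := norm_sum_homogeneousPart_sub_le one_pos (diffContOnCl_comp_smul_const hf hdisc)
    (fun t ht ↦ hC _ (hdisc t ht.le)) (mem_ball_zero_iff.1 ht1) (n + 1)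
  rw [div_one, Finset.sum_range_succ] at htail
  calc dist (homogeneousPart f n v)
        ((t ^ n)⁻¹ • (f (t • v) - ∑ k ∈ Finset.range n, t ^ k • homogeneousPart f k v))
      = ‖(t ^ n)⁻¹ • (∑ k ∈ Finset.range n, t ^ k • homogeneousPart f k v +
          t ^ n • homogeneousPart f n v - f (t • v))‖ := by
        rw [dist_eq_norm]
        nth_rewrite 1 [← inv_smul_smul₀ htn (homogeneousPart f n v)]
        rw [← smul_sub]
        congr 2
        abel
    _ ≤ (‖t‖ ^ n)⁻¹ * (C * ‖t‖ ^ (n + 1) / (1 - ‖t‖)) := by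
        rw [norm_smul, norm_inv, norm_pow]
        gcongr
    _ = C * ‖t‖ / (1 - ‖t‖) := by
        have : ‖t‖ ≠ 0 := norm_ne_zero_iff.2 ht0
        field_simp
        ring
    _ < ε := htε

theorem differentiableOn_homogeneousPart_ball {s : ℝ} (hf : DifferentiableOn ℂ f (ball 0 s))
    (hC : ∀ z ∈ ball 0 s, ‖f z‖ ≤ C) (n : ℕ) :
    DifferentiableOn ℂ (homogeneousPart f n) (ball 0 s) := by
  induction n using Nat.strong_induction_on with
  | _ n ih =>
    refine differentiableOn_of_tendstoUniformlyOn isOpen_ball ?_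
      (tendstoUniformlyOn_homogeneousPart hf hC n)
    filter_upwards [nhdsWithin_le_nhds (ball_mem_nhds (0 : ℂ) one_pos)] with t ht
    have hslice : DifferentiableOn ℂ (fun v ↦ f (t • v)) (ball 0 s) :=
      hf.comp (by fun_prop : Differentiable ℂ fun v : E ↦ t • v).differentiableOn fun v hv ↦
        balanced_ball_zero.smul_mem (mem_ball_zero_iff.1 ht).le hv
    exact (hslice.sub (DifferentiableOn.fun_sum fun k hk ↦
      (ih k (Finset.mem_range.1 hk)).const_smul _)).const_smul _

theorem differentiable_homogeneousPart {U : Set E} (hU : U ∈ 𝓝 0)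
    (hf : DifferentiableOn ℂ f U) (n : ℕ) : Differentiable ℂ (homogeneousPart f n) := by
  have hbdd : ∀ᶠ z in 𝓝 (0 : E), ‖f z‖ < ‖f 0‖ + 1 :=
    (hf.differentiableAt hU).continuousAt.norm.eventually_lt_const (lt_add_one _)
  obtain ⟨s, hs, hsub⟩ := Metric.mem_nhds_iff.1 (inter_mem hU hbdd)
  have hball : DifferentiableOn ℂ (homogeneousPart f n) (ball 0 s) :=
    differentiableOn_homogeneousPart_ball (hf.mono fun z hz ↦ (hsub hz).1)
      (fun z hz ↦ (hsub hz).2.le) n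
  intro v
  obtain ⟨c, hcv, hc⟩ : ∃ c : ℂ, c • v ∈ ball 0 s ∧ c ≠ 0 := by
    have hlim : Tendsto (fun c : ℂ ↦ c • v) (𝓝 0) (𝓝 0) := by
      simpa using (by fun_prop : Continuous fun c : ℂ ↦ c • v).tendsto 0
    have hnear := hlim.eventually_mem (ball_mem_nhds 0 hs)
    exact ((eventually_nhdsWithin_of_eventually_nhds hnear).and
      eventually_mem_nhdsWithin).exists (f := 𝓝[≠] 0)
  have hscale : homogeneousPart f n = fun w ↦ (c ^ n)⁻¹ • homogeneousPart f n (c • w) := by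
    ext w
    rw [homogeneousPart_smul, inv_smul_smul₀ (pow_ne_zero n hc)]
  rw [hscale]
  exact ((hball.differentiableAt (isOpen_ball.mem_nhds hcv)).comp v (by fun_prop)).const_smul _

theorem tsum_homogeneousPart_eventuallyEq {U : Set E} (hU : U ∈ 𝓝 0)
    (hf : DifferentiableOn ℂ f U) :
    (fun z ↦ ∑' n, homogeneousPart f n z) =ᶠ[𝓝 0] f := by
  obtain ⟨s, hs, hsU⟩ := Metric.mem_nhds_iff.1 hU
  filter_upwards [ball_mem_nhds 0 (half_pos hs)] with z hz
  have hdisc (t : ℂ) (ht : ‖t‖ ≤ 2) : t • z ∈ U := hsU <| by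
    rw [mem_ball_zero_iff, norm_smul]
    nlinarith [norm_nonneg z, mem_ball_zero_iff.1 hz]
  simpa using (hasSum_homogeneousPart (diffContOnCl_comp_smul_const hf hdisc).differentiableOn
    (t := 1) (by simp)).tsum_eq

end HomogeneousPart

theorem differentiableOn_tsum_of_norm_le_geometric [CompleteSpace F] {P : ℕ → E → F} {R C : ℝ}
    (hP : ∀ n, DifferentiableOn ℂ (P n) (ball 0 R))
    (hC : ∀ n z, z ∈ ball 0 R → ‖P n z‖ ≤ C * (‖z‖ / R) ^ n) :
    DifferentiableOn ℂ (fun z ↦ ∑' n, P n z) (ball 0 R) := by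
  intro z hz
  obtain ⟨ρ, hzρ, hρR⟩ := exists_between (mem_ball_zero_iff.1 hz)
  have hρ : 0 < ρ := (norm_nonneg z).trans_lt hzρ
  have hR : 0 < R := hρ.trans hρR
  have hC₀ : 0 ≤ C := by simpa using (norm_nonneg _).trans (hC 0 z hz)
  have hsub : ball (0 : E) ρ ⊆ ball 0 R := ball_subset_ball hρR.le
  have hsum : Summable fun n ↦ C * (ρ / R) ^ n :=
    (summable_geometric_of_lt_one (by positivity) ((div_lt_one hR).2 hρR)).mul_left C
  have hunif := tendstoUniformlyOn_tsum_nat hsum (f := P) (s := ball 0 ρ) fun n w hw ↦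
    (hC n w (hsub hw)).trans (by have := (mem_ball_zero_iff.1 hw).le; gcongr)
  have hdiff : DifferentiableOn ℂ (fun z ↦ ∑' n, P n z) (ball 0 ρ) :=
    differentiableOn_of_tendstoUniformlyOn isOpen_ball
      (.of_forall fun N ↦ DifferentiableOn.fun_sum fun n _ ↦ (hP n).mono hsub) hunif
  exact (hdiff.differentiableAt (isOpen_ball.mem_nhds (mem_ball_zero_iff.2 hzρ)))
    |>.differentiableWithinAt

/-- `T` is a boundary, in the sense of uniform algebras, for the functions holomorphic near the
closed unit ball: such functions obey the maximum principle with respect to `T`. Holomorphy near the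
closed ball is encoded as holomorphy on a concentric ball of radius `r > 1`. -/
structure IsUnitBallBoundary (T : Set E) : Prop where
  subset_closedBall : T ⊆ closedBall 0 1
  norm_le : ∀ ⦃r : ℝ⦄, 1 < r → ∀ ⦃g : E → ℂ⦄, DifferentiableOn ℂ g (ball 0 r) →
    ∀ ⦃c : ℝ⦄, (∀ w ∈ T, ‖g w‖ ≤ c) → ∀ ⦃z : E⦄, ‖z‖ ≤ 1 → ‖g z‖ ≤ c

namespace IsUnitBallBoundary

variable {S T : Set E}

theorem mono (hT : IsUnitBallBoundary T) (hTS : T ⊆ S) (hS : S ⊆ closedBall 0 1) :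
    IsUnitBallBoundary S :=
  ⟨hS, fun _ hr _ hg _ hc ↦ hT.norm_le hr hg fun w hw ↦ hc w (hTS hw)⟩

theorem nonempty (hT : IsUnitBallBoundary T) : T.Nonempty := by
  by_contra! hempty
  have := hT.norm_le one_lt_two (differentiableOn_const (0 : ℂ)) (c := -1)
    (by simp [hempty]) (z := 0) (by simp)
  norm_num at this

theorem sphere [Nontrivial E] : IsUnitBallBoundary (sphere (0 : E) 1) := by
  refine ⟨sphere_subset_closedBall, fun r hr g hg c hc z hz ↦ ?_⟩
  have hdiff : DiffContOnCl ℂ g (ball 0 1) :=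
    (hg.mono (closure_ball_subset_closedBall.trans (closedBall_subset_ball hr))).diffContOnCl
  refine Complex.norm_le_of_forall_mem_frontier_norm_le isBounded_ball hdiff
    (fun w hw ↦ hc w (frontier_ball_subset_sphere hw)) ?_
  rwa [closure_ball 0 one_ne_zero, mem_closedBall_zero_iff]

theorem prod {T' : Set F} (hT : IsUnitBallBoundary T) (hT' : IsUnitBallBoundary T') :
    IsUnitBallBoundary (T ×ˢ T') := by
  refine ⟨?_, fun r hr g hg c hc z hz ↦ ?_⟩
  · rw [← Prod.mk_zero_zero, ← closedBall_prod_same]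
    exact prod_mono hT.subset_closedBall hT'.subset_closedBall
  have hball {x : E} {y : F} (hx : ‖x‖ < r) (hy : ‖y‖ < r) : (x, y) ∈ ball (0 : E × F) r :=
    mem_ball_zero_iff.2 (max_lt hx hy)
  have hz₂ : ‖z.2‖ < r := ((norm_snd_le z).trans hz).trans_lt hr
  refine hT.norm_le (g := fun x ↦ g (x, z.2)) hr
    (hg.comp (by fun_prop) fun x hx ↦ hball (mem_ball_zero_iff.1 hx) hz₂) (fun w hw ↦ ?_)
    ((norm_fst_le z).trans hz)
  have hw₁ : ‖w‖ < r := (mem_closedBall_zero_iff.1 (hT.subset_closedBall hw)).trans_lt hr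
  exact hT'.norm_le (g := fun y ↦ g (w, y)) hr
    (hg.comp (by fun_prop) fun y hy ↦ hball hw₁ (mem_ball_zero_iff.1 hy))
    (fun y hy ↦ hc _ ⟨hw, hy⟩) ((norm_snd_le z).trans hz)

theorem norm_homogeneousPart_le (hT : IsUnitBallBoundary T) {f : E → ℂ} {n : ℕ} {M : ℝ}
    (hdiff : Differentiable ℂ (homogeneousPart f n)) (hM : ∀ v ∈ T, ‖homogeneousPart f n v‖ ≤ M)
    (z : E) : ‖homogeneousPart f n z‖ ≤ ‖z‖ ^ n * M := by
  set u : E := ((‖z‖ : ℂ)⁻¹) • z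
  have hu : ‖u‖ ≤ 1 := by
    rw [norm_smul, norm_inv, Complex.norm_real, norm_norm]
    exact inv_mul_le_one
  have hz : z = (‖z‖ : ℂ) • u := by
    rcases eq_or_ne z 0 with rfl | hz
    · simp
    · exact (smul_inv_smul₀ (by simpa using hz) z).symm
  calc ‖homogeneousPart f n z‖ = ‖z‖ ^ n * ‖homogeneousPart f n u‖ := by
        conv_lhs => rw [hz, homogeneousPart_smul, norm_smul, norm_pow, Complex.norm_real, norm_norm]
    _ ≤ ‖z‖ ^ n * M := by
        gcongr
        exact hT.norm_le one_lt_two hdiff.differentiableOn hM hu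

end IsUnitBallBoundary

theorem exists_one_lt_smul_subset {X U : Set E} (hX : IsCompact X) (hU : IsOpen U) (hXU : X ⊆ U) :
    ∃ R : ℝ, 1 < R ∧ (R : ℂ) • X ⊆ U := by
  have hnear : ∀ᶠ R : ℝ in 𝓝 1, ∀ x ∈ X, (R : ℂ) • x ∈ U := by
    refine hX.eventually_forall_of_forall_eventually fun x hx ↦ ?_
    have hcont : Continuous fun p : ℝ × E ↦ (p.1 : ℂ) • p.2 := by fun_prop
    exact hcont.continuousAt.eventually_mem (hU.mem_nhds (by simpa using hXU hx))
  obtain ⟨R, hRX, hR⟩ :=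
    ((eventually_nhdsWithin_of_eventually_nhds hnear).and (self_mem_nhdsWithin (s := Ioi 1))).exists
  exact ⟨R, hR, smul_set_subset_iff.2 hRX⟩

theorem exists_differentiableOn_ball_eqOn {X U : Set E} (hX : IsUnitBallBoundary X)
    (hcomp : IsCompact X) (hbal : Balanced ℂ X) (hU : IsOpen U) (hXU : X ⊆ U) {f : E → ℂ}
    (hf : DifferentiableOn ℂ f U) :
    ∃ (R : ℝ) (g : E → ℂ), 1 < R ∧ DifferentiableOn ℂ g (ball 0 R) ∧
      EqOn g f (connectedComponentIn (U ∩ ball 0 R) 0) := by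
  obtain ⟨R, hR, hRXU⟩ := exists_one_lt_smul_subset hcomp hU hXU
  have hR₀ : 0 < R := one_pos.trans hR
  obtain ⟨C, hC⟩ := (hcomp.smul (R : ℂ)).exists_bound_of_continuousOn (hf.continuousOn.mono hRXU)
  have h0U : U ∈ 𝓝 (0 : E) := hU.mem_nhds (hXU (hbal.zero_mem hX.nonempty))
  have hdisc {v : E} (hv : v ∈ X) (t : ℂ) (ht : ‖t‖ ≤ R) : t • v ∈ (R : ℂ) • X :=
    hbal.smul_mono (by simpa [abs_of_pos hR₀] using ht) (smul_mem_smul_set hv)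
  have hcauchy (n : ℕ) : ∀ v ∈ X, ‖homogeneousPart f n v‖ ≤ C / R ^ n := fun v hv ↦
    norm_homogeneousPart_le hR₀
      (diffContOnCl_comp_smul_const hf fun t ht ↦ hRXU (hdisc hv t ht))
      (fun t ht ↦ hC _ (hdisc hv t ht.le)) n
  have hpart (n : ℕ) : Differentiable ℂ (homogeneousPart f n) :=
    differentiable_homogeneousPart h0U hf n
  have hg : DifferentiableOn ℂ (fun z ↦ ∑' n, homogeneousPart f n z) (ball 0 R) :=
    differentiableOn_tsum_of_norm_le_geometric (C := C) (fun n ↦ (hpart n).differentiableOn)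
      fun n z _ ↦ (hX.norm_homogeneousPart_le (hpart n) (hcauchy n) z).trans_eq (by
        rw [div_pow]; ring)
  have hsub := connectedComponentIn_subset (U ∩ ball 0 R) 0
  refine ⟨R, _, hR, hg, eqOn_of_isPreconnected_of_eventuallyEq
    (hU.inter isOpen_ball).connectedComponentIn isPreconnected_connectedComponentIn
    (hg.mono (hsub.trans inter_subset_right)) (hf.mono (hsub.trans inter_subset_left))
    (mem_connectedComponentIn ⟨mem_of_mem_nhds h0U, mem_ball_self hR₀⟩)
    (tsum_homogeneousPart_eventuallyEq h0U hf)⟩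

theorem subset_connectedComponentIn_of_balanced {S A : Set E} (hS : Balanced ℂ S) (hSA : S ⊆ A) :
    S ⊆ connectedComponentIn A 0 := by
  intro z hz
  let disc : Set E := (fun t : ℂ ↦ t • z) '' closedBall 0 1
  have hdisc : IsPreconnected disc :=
    (convex_closedBall 0 1).isPreconnected.image _ (by fun_prop)
  have hdiscA : disc ⊆ A := by
    rintro _ ⟨t, ht, rfl⟩
    exact hSA (hS.smul_mem (mem_closedBall_zero_iff.1 ht) hz)
  have h0 : (0 : E) ∈ disc := ⟨0, by simp⟩
  have h1 : z ∈ disc := ⟨1, by simp⟩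
  exact hdisc.subset_connectedComponentIn h0 hdiscA h1

theorem subset_connectedComponentIn_inter_of_closure_subset {α : Type*} [TopologicalSpace α]
    [LocallyConnectedSpace α] {V B : Set α} {x : α} (hV : IsOpen V) (hB : IsOpen B)
    (hconn : IsPreconnected B) (hx : x ∈ V ∩ B)
    (hcl : closure (connectedComponentIn (V ∩ B) x) ⊆ V) : B ⊆ connectedComponentIn (V ∩ B) x := by
  have hxc := mem_connectedComponentIn hx
  refine hconn.subset_of_closure_inter_subset (hV.inter hB).connectedComponentIn ⟨x, hx.2, hxc⟩ ?_
  rintro y ⟨hycl, hyB⟩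
  have hy : y ∈ V ∩ B := ⟨hcl hycl, hyB⟩
  have hinsert : IsPreconnected (insert y (connectedComponentIn (V ∩ B) x)) :=
    isPreconnected_connectedComponentIn.subset_closure (subset_insert _ _)
      (insert_subset hycl subset_closure)
  exact hinsert.subset_connectedComponentIn (mem_insert_of_mem y hxc)
    (insert_subset hy (connectedComponentIn_subset _ _)) (mem_insert y _)

section Stein

variable {X : Set (ℂ × ℂ)}

theorem connectedComponentIn_subset_holHull {V : Set (ℂ × ℂ)} (hX : IsUnitBallBoundary X)
    (hcomp : IsCompact X) (hbal : Balanced ℂ X) (hV : IsOpen V) (hXV : X ⊆ V) :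
    connectedComponentIn (V ∩ ball 0 1) 0 ⊆ holHull V X := by
  intro z hz
  obtain ⟨hzV, hz1⟩ := connectedComponentIn_subset _ _ hz
  refine ⟨hzV, fun f hf c hc ↦ ?_⟩
  obtain ⟨R, g, hR, hg, hgf⟩ := exists_differentiableOn_ball_eqOn hX hcomp hbal hV hXV hf
  have hXcomponent : X ⊆ connectedComponentIn (V ∩ ball 0 R) 0 :=
    subset_connectedComponentIn_of_balanced hbal
      (subset_inter hXV (hX.subset_closedBall.trans (closedBall_subset_ball hR)))
  have hzcomponent : z ∈ connectedComponentIn (V ∩ ball 0 R) 0 :=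
    connectedComponentIn_mono 0 (inter_subset_inter_right V (ball_subset_ball hR.le)) hz
  rw [← hgf hzcomponent]
  exact hX.norm_le hR hg (fun w hw ↦ (hgf (hXcomponent hw)).symm ▸ hc w hw)
    (mem_ball_zero_iff.1 hz1).le

theorem closedBall_subset_of_isSteinOpen {V : Set (ℂ × ℂ)} (hX : IsUnitBallBoundary X)
    (hcomp : IsCompact X) (hbal : Balanced ℂ X) (hV : IsSteinOpen V) (hXV : X ⊆ V) :
    closedBall 0 1 ⊆ V := by
  have hhull := connectedComponentIn_subset_holHull hX hcomp hbal hV.1 hXV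
  have hclosed : IsClosed (holHull V X) := (hV.2 X hXV hcomp).isClosed
  have hhullV : holHull V X ⊆ V := fun _ hz ↦ hz.1
  have hball : ball (0 : ℂ × ℂ) 1 ⊆ connectedComponentIn (V ∩ ball 0 1) 0 :=
    subset_connectedComponentIn_inter_of_closure_subset hV.1 isOpen_ball
      (convex_ball 0 1).isPreconnected
      ⟨hXV (hbal.zero_mem hX.nonempty), mem_ball_self one_pos⟩
      ((closure_minimal hhull hclosed).trans hhullV)
  rw [← closure_ball 0 one_ne_zero]
  exact (closure_minimal (hball.trans hhull) hclosed).trans hhullV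

theorem not_isSteinCompact_of_isUnitBallBoundary (hX : IsUnitBallBoundary X)
    (hcomp : IsCompact X) (hbal : Balanced ℂ X) (hne : X ≠ closedBall 0 1) :
    ¬ IsSteinCompact X := by
  intro hstein
  obtain ⟨p, hp, hpX⟩ := exists_of_ssubset (hX.subset_closedBall.ssubset_of_ne hne)
  obtain ⟨V, hV, hXV, hVp⟩ := hstein {p}ᶜ isOpen_compl_singleton (subset_compl_singleton_iff.2 hpX)
  exact hVp (closedBall_subset_of_isSteinOpen hX hcomp hbal hV hXV hp) rfl

theorem levi_flat_cone_not_stein_general (hX : IsUnitBallBoundary X) (hcomp : IsCompact X)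
    (hbal : Balanced ℂ X) (hne : X ≠ closedBall 0 1) :
    (∀ U : Set (ℂ × ℂ), IsOpen U → X ⊆ U → ∀ f : ℂ × ℂ → ℂ, DifferentiableOn ℂ f U →
      ∃ (W : Set (ℂ × ℂ)) (g : ℂ × ℂ → ℂ), IsOpen W ∧ closedBall 0 1 ⊆ W ∧
        DifferentiableOn ℂ g W ∧
        ∀ S : Set (ℂ × ℂ), Balanced ℂ S → S ⊆ U ∩ closedBall 0 1 → EqOn g f S) ∧
      ¬ IsSteinCompact X := by
  refine ⟨fun U hU hXU f hf ↦ ?_, not_isSteinCompact_of_isUnitBallBoundary hX hcomp hbal hne⟩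
  obtain ⟨R, g, hR, hg, hgf⟩ := exists_differentiableOn_ball_eqOn hX hcomp hbal hU hXU hf
  have hball : closedBall (0 : ℂ × ℂ) 1 ⊆ ball 0 R := closedBall_subset_ball hR
  exact ⟨ball 0 R, g, isOpen_ball, hball, hg, fun S hS hSU ↦ hgf.mono
    (subset_connectedComponentIn_of_balanced hS
      (hSU.trans (inter_subset_inter_right U hball)))⟩

end Stein

end Holomorphic

section EqualNormCone

open Metric Set

variable {E F : Type*} [NormedAddCommGroup E] [NormedAddCommGroup F]

variable (E F) in
/-- The cone `{‖x‖ = ‖y‖ ≤ 1}`; for `E = F = ℂ` it is the Levi-flat hypersurface `X` of the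
theorem. -/
def equalNormCone : Set (E × F) :=
  {z | ‖z.1‖ = ‖z.2‖ ∧ ‖z.1‖ ≤ 1}

theorem equalNormCone_subset_closedBall : equalNormCone E F ⊆ closedBall 0 1 :=
  fun _ hz ↦ mem_closedBall_zero_iff.2 (max_le hz.2 (hz.1 ▸ hz.2))

theorem isCompact_equalNormCone [ProperSpace E] [ProperSpace F] :
    IsCompact (equalNormCone E F) := by
  have h₁ : Continuous fun z : E × F ↦ ‖z.1‖ := by fun_prop
  have h₂ : Continuous fun z : E × F ↦ ‖z.2‖ := by fun_prop
  exact (isCompact_closedBall 0 1).of_isClosed_subset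
    ((isClosed_eq h₁ h₂).inter (isClosed_le h₁ continuous_const)) equalNormCone_subset_closedBall

theorem equalNormCone_ne_closedBall [NormedSpace ℂ E] [Nontrivial E] :
    equalNormCone E F ≠ closedBall 0 1 := by
  obtain ⟨x, hx⟩ := NormedSpace.sphere_nonempty (x := (0 : E)) (r := 1) |>.2 zero_le_one
  rw [mem_sphere_zero_iff_norm] at hx
  intro heq
  have hmem : (x, (0 : F)) ∈ equalNormCone E F := heq ▸ by simp [hx]
  simpa [hx] using hmem.1

variable [NormedSpace ℂ E] [NormedSpace ℂ F]

theorem balanced_equalNormCone : Balanced ℂ (equalNormCone E F) := by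
  refine balanced_iff_smul_mem.2 fun a ha z hz ↦ ⟨?_, ?_⟩
  · simp only [Prod.smul_fst, Prod.smul_snd, norm_smul, hz.1]
  · simpa only [Prod.smul_fst, norm_smul] using mul_le_one₀ ha (norm_nonneg _) hz.2

theorem isUnitBallBoundary_equalNormCone [Nontrivial E] [Nontrivial F] :
    IsUnitBallBoundary (equalNormCone E F) := by
  refine (IsUnitBallBoundary.sphere.prod IsUnitBallBoundary.sphere).mono ?_
    equalNormCone_subset_closedBall
  rintro z ⟨hz₁, hz₂⟩
  rw [mem_sphere_zero_iff_norm] at hz₁ hz₂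
  exact ⟨hz₁.trans hz₂.symm, hz₁.le⟩

theorem balanced_setOf_abs_norm_sub_norm_lt (ε : ℝ) :
    Balanced ℂ {z : E × F | |‖z.1‖ - ‖z.2‖| < ε ∧ ‖z.1‖ ≤ 1 ∧ ‖z.2‖ ≤ 1} := by
  refine balanced_iff_smul_mem.2 fun a ha z ⟨hε, h₁, h₂⟩ ↦ ?_
  simp only [mem_ofPred_eq, Prod.smul_fst, Prod.smul_snd, norm_smul, ← mul_sub, abs_mul, abs_norm]
  exact ⟨(mul_le_of_le_one_left (abs_nonneg _) ha).trans_lt hε,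
    mul_le_one₀ ha (norm_nonneg _) h₁, mul_le_one₀ ha (norm_nonneg _) h₂⟩

end EqualNormCone

/-- for every ε > 0, every function holomorphic near
`V_ε = {||z₁| − |z₂|| < ε, |z₁| ≤ 1, |z₂| ≤ 1}` extends holomorphically to a neighborhood
of the closed bidisc; in particular, the singular Levi-flat hypersurface
`X = {|z₁| = |z₂| ≤ 1}` (whose boundary is the torus) is not a Stein compact. -/
theorem levi_flat_cone_not_stein :
    let X : Set (ℂ × ℂ) := {z | ‖z.1‖ = ‖z.2‖ ∧ ‖z.1‖ ≤ 1}
    let D : Set (ℂ × ℂ) := {z | ‖z.1‖ ≤ 1 ∧ ‖z.2‖ ≤ 1}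
    (∀ ε : ℝ, 0 < ε →
      let Vε : Set (ℂ × ℂ) := {z | |‖z.1‖ - ‖z.2‖| < ε ∧ ‖z.1‖ ≤ 1 ∧ ‖z.2‖ ≤ 1}
      ∀ (U : Set (ℂ × ℂ)), IsOpen U → Vε ⊆ U →
        ∀ f : ℂ × ℂ → ℂ, DifferentiableOn ℂ f U →
          ∃ (W : Set (ℂ × ℂ)) (g : ℂ × ℂ → ℂ), IsOpen W ∧ D ⊆ W ∧
            DifferentiableOn ℂ g W ∧ Set.EqOn g f Vε) ∧
    ¬ IsSteinCompact X := by
  intro X D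
  obtain ⟨hext, hstein⟩ := levi_flat_cone_not_stein_general (X := X)
    isUnitBallBoundary_equalNormCone isCompact_equalNormCone balanced_equalNormCone
    equalNormCone_ne_closedBall
  refine ⟨?_, hstein⟩
  intro ε hε Vε U hU hVU f hf
  have hXV : X ⊆ Vε := fun z hz ↦ ⟨by simpa [hz.1] using hε, hz.2, hz.1 ▸ hz.2⟩
  have hD : D = Metric.closedBall 0 1 := by ext z; simp [D, Prod.norm_def]
  obtain ⟨W, g, hW, hDW, hg, hgf⟩ := hext U hU (hXV.trans hVU) f hf
  exact ⟨W, g, hW, hD ▸ hDW, hg, hgf Vε (balanced_setOf_abs_norm_sub_norm_lt ε)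
    fun z hz ↦ ⟨hVU hz, hD ▸ hz.2⟩⟩

end
end

section
/- The equation 𝖫(u;k) = 0 on ℝ³ with k a real constant admits a locally Lipschitz weak solution if and only if k = 0. -/
noncomputable section

abbrev R3 := ℝ × ℝ × ℝ

def e1 : R3 := (1, 0, 0)
def e2 : R3 := (0, 1, 0)
def e3 : R3 := (0, 0, 1)

def pd (v : R3 → ℝ) (w : R3) (p : R3) : ℝ := fderiv ℝ v p w

def pd2 (v : R3 → ℝ) (w w' : R3) (p : R3) : ℝ := fderiv ℝ (fun q => fderiv ℝ v q w') p w

def GraphLevi (v : R3 → ℝ) (p : R3) : ℝ :=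
  (1 + pd v e3 p ^ 2) * (pd2 v e1 e1 p + pd2 v e2 e2 p)
    + (pd v e1 p ^ 2 + pd v e2 p ^ 2) * pd2 v e3 e3 p
    + 2 * (pd v e2 p - pd v e1 p * pd v e3 p) * pd2 v e1 e3 p
    - 2 * (pd v e1 p + pd v e2 p * pd v e3 p) * pd2 v e2 e3 p

/-- The complete Levi operator 𝖫(v;k) for graphs. -/
def GraphLeviK (v : R3 → ℝ) (k : R3 → ℝ) (p : R3) : ℝ :=
  GraphLevi v p
    + k p * (1 + pd v e1 p ^ 2 + pd v e2 p ^ 2 + pd v e3 p ^ 2) ^ ((3 : ℝ) / 2)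

/-- Weak (viscosity) solution of 𝖫(u;k) = 0 on `U`. -/
def IsWeakGraphLeviSolution (k : R3 → ℝ) (u : R3 → ℝ) (U : Set R3) : Prop :=
  (∀ y ∈ U, ∀ φ : R3 → ℝ, ContDiff ℝ (⊤ : ℕ∞) φ →
    IsLocalMax (fun x => u x - φ x) y → 0 ≤ GraphLeviK φ k y) ∧
  (∀ y ∈ U, ∀ φ : R3 → ℝ, ContDiff ℝ (⊤ : ℕ∞) φ →
    IsLocalMin (fun x => u x - φ x) y → GraphLeviK φ k y ≤ 0)

/-- locally Lipschitz on a set. -/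
def LocLipschitzOn (u : R3 → ℝ) (U : Set R3) : Prop :=
  ∀ p ∈ U, ∃ (C : NNReal) (V : Set R3), V ∈ nhds p ∧ LipschitzOnWith C u (V ∩ U)

def sqnorm (p : R3) : ℝ := p.1 ^ 2 + p.2.1 ^ 2 + p.2.2 ^ 2

/-- The Euclidean ball B(R) ⊂ ℝ³. -/
def ballR (R : ℝ) : Set R3 := {p | sqnorm p < R ^ 2}


/-!
Let `u` be a supersolution in the ball `B(R)`, continuous on its closure. The radial function
`φ = R log (R² - |x|²)` tends to `-∞` at the boundary, so `u - φ` has a minimum at some interior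
point `y`, and therefore `𝖫(φ;k) ≤ 0` at `y`. Since `1 + |Dφ|²` is the perfect square
`((R² + |x|²) / (R² - |x|²))²`, the Levi operator of `φ` is easily compared with
`(1 + |Dφ|²)^(3/2)`, and one finds `k y ≤ 5 / R`. For a constant `k` on `ℝ³`, letting `R → ∞` gives
`k ≤ 0`. The operator is not odd in `u`, but it is odd under
`ũ(x₁, x₂, x₃) = -u(x₁, x₂, -x₃)`, which turns subsolutions for `k` into supersolutions for `-k`;
hence also `-k ≤ 0`.
-/

open Filter Topology

section NormedSpace

variable {E : Type*} [NormedAddCommGroup E] [NormedSpace ℝ E]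

theorem exists_contDiff_eventuallyEq_of_contDiffOn [HasContDiffBump E] {F : Type*}
    [NormedAddCommGroup F] [NormedSpace ℝ F] {n : ℕ∞} {f : E → F} {s : Set E} {x : E}
    (hs : IsOpen s) (hx : x ∈ s) (hf : ContDiffOn ℝ n f s) :
    ∃ g : E → F, ContDiff ℝ n g ∧ g =ᶠ[𝓝 x] f := by
  obtain ⟨ε, hε, hεs⟩ := Metric.nhds_basis_closedBall.mem_iff.1 (hs.mem_nhds hx)
  let χ : ContDiffBump x := ⟨ε / 2, ε, half_pos hε, half_lt_self hε⟩
  refine ⟨fun y => χ y • f y, contDiff_iff_contDiffAt.2 fun y => ?_, ?_⟩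
  · by_cases hy : y ∈ s
    · exact χ.contDiffAt.smul (hf.contDiffAt (hs.mem_nhds hy))
    · have hy_supp : y ∉ tsupport χ := fun h => hy (hεs (χ.tsupport_eq ▸ h))
      refine contDiffAt_const (c := 0) |>.congr_of_eventuallyEq ?_
      filter_upwards [notMem_tsupport_iff_eventuallyEq.1 hy_supp] with z hz
      simp [hz]
  · filter_upwards [χ.eventuallyEq_one] with y hy
    simp [hy]

theorem deriv_deriv_nonpos_of_isLocalMax {f : ℝ → ℝ} {x : ℝ} (h : IsLocalMax f x)
    (hf : ContinuousAt f x) : deriv (deriv f) x ≤ 0 := by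
  by_contra! hpos
  have hmin : IsLocalMin f x := isLocalMin_of_deriv_deriv_pos hpos h.deriv_eq_zero hf
  have hconst : f =ᶠ[𝓝 x] fun _ => f x := by
    filter_upwards [h, hmin] with y hle hge using le_antisymm hle hge
  simp [hconst.deriv.deriv_eq] at hpos

theorem differentiableAt_fderiv_apply {F : Type*} [NormedAddCommGroup F] [NormedSpace ℝ F]
    {f : E → F} {x : E} (hf : ContDiffAt ℝ 2 f x) (v : E) :
    DifferentiableAt ℝ (fun y => fderiv ℝ f y v) x :=
  ((hf.fderiv_right (m := 1) le_rfl).differentiableAt one_ne_zero).clm_apply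
    (differentiableAt_const v)

theorem deriv_deriv_comp_line {f : E → ℝ} {x : E} (hf : ContDiffAt ℝ 2 f x) (v : E) :
    deriv (deriv fun t : ℝ => f (x + t • v)) 0 = fderiv ℝ (fun y => fderiv ℝ f y v) x v := by
  have hline (t : ℝ) : HasDerivAt (fun t : ℝ => x + t • v) v t := by
    simpa using ((hasDerivAt_id t).smul_const v).const_add x
  have hline_tendsto : Tendsto (fun t : ℝ => x + t • v) (𝓝 0) (𝓝 x) := by
    simpa using (hline 0).continuousAt.tendsto
  have hderiv : deriv (fun t : ℝ => f (x + t • v)) =ᶠ[𝓝 0]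
      fun t => fderiv ℝ f (x + t • v) v := by
    filter_upwards [hline_tendsto.eventually (hf.eventually (by simp))] with t ht
    exact ((ht.differentiableAt two_ne_zero).hasFDerivAt.comp_hasDerivAt t (hline t)).deriv
  have hfderiv := (differentiableAt_fderiv_apply hf v).hasFDerivAt
  rw [hderiv.deriv_eq]
  exact (hfderiv.comp_hasDerivAt_of_eq 0 (hline 0) (by simp)).deriv

theorem fderiv_fderiv_apply_self_nonpos_of_isLocalMax {f : E → ℝ} {x : E} (h : IsLocalMax f x)
    (hf : ContDiffAt ℝ 2 f x) (v : E) : fderiv ℝ (fun y => fderiv ℝ f y v) x v ≤ 0 := by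
  have hline : ContinuousAt (fun t : ℝ => x + t • v) 0 := by fun_prop
  rw [← deriv_deriv_comp_line hf]
  refine deriv_deriv_nonpos_of_isLocalMax ?_ (hf.continuousAt.comp_of_eq hline (by simp))
  exact IsLocalMax.comp_continuous (g := fun t : ℝ => x + t • v) (by simpa using h) hline

end NormedSpace

section Derivatives

variable {v v' : R3 → ℝ} {p : R3}

theorem pd2_eq_pd_pd (v : R3 → ℝ) (w w' : R3) : pd2 v w w' = pd (pd v w') w := rfl

theorem pd_congr (h : v =ᶠ[𝓝 p] v') (w : R3) : pd v w p = pd v' w p := by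
  simp only [pd, h.fderiv_eq]

theorem pd2_congr (h : v =ᶠ[𝓝 p] v') (w w' : R3) : pd2 v w w' p = pd2 v' w w' p :=
  pd_congr (h.eventuallyEq_nhds.mono fun _ hq => pd_congr hq w') w

theorem graphLeviK_congr (h : v =ᶠ[𝓝 p] v') (k : R3 → ℝ) :
    GraphLeviK v k p = GraphLeviK v' k p := by
  simp only [GraphLeviK, GraphLevi, pd_congr h, pd2_congr h]

theorem graphLeviK_lt_graphLeviK {k k' : R3 → ℝ} {p : R3} (h : k p < k' p) (v : R3 → ℝ) :
    GraphLeviK v k p < GraphLeviK v k' p := by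
  unfold GraphLeviK
  gcongr

theorem pd_comp {g : ℝ → ℝ} (hg : DifferentiableAt ℝ g (v p)) (hv : DifferentiableAt ℝ v p)
    (w : R3) : pd (g ∘ v) w p = deriv g (v p) * pd v w p := by
  simp [pd, (hg.hasDerivAt.comp_hasFDerivAt p hv.hasFDerivAt).fderiv]

theorem pd2_comp {g : ℝ → ℝ} (hg : ContDiffAt ℝ 2 g (v p)) (hv : ContDiffAt ℝ 2 v p)
    (w w' : R3) :
    pd2 (g ∘ v) w w' p =
      deriv (deriv g) (v p) * pd v w p * pd v w' p + deriv g (v p) * pd2 v w w' p := by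
  have hchain : pd (g ∘ v) w' =ᶠ[𝓝 p] fun q => deriv g (v q) * pd v w' q := by
    filter_upwards [hv.continuousAt.eventually (hg.eventually (by simp)),
      hv.eventually (by simp)] with q hgq hvq
    exact pd_comp (hgq.differentiableAt two_ne_zero) (hvq.differentiableAt two_ne_zero) w'
  have hg' : DifferentiableAt ℝ (deriv g) (v p) := differentiableAt_fderiv_apply hg 1
  have hg'v : DifferentiableAt ℝ (fun q => deriv g (v q)) p :=
    hg'.comp p (hv.differentiableAt two_ne_zero)
  have hproduct := fderiv_fun_mul hg'v (differentiableAt_fderiv_apply hv w')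
  calc pd2 (g ∘ v) w w' p
      = pd (fun q => deriv g (v q) * pd v w' q) w p := pd_congr hchain w
    _ = deriv g (v p) * pd2 v w w' p + pd v w' p * pd (deriv g ∘ v) w p :=
      DFunLike.congr_fun hproduct w
    _ = deriv (deriv g) (v p) * pd v w p * pd v w' p + deriv g (v p) * pd2 v w w' p := by
      rw [pd_comp hg' (hv.differentiableAt two_ne_zero)]
      ring

end Derivatives

section Sqnorm

theorem sqnorm_nonneg (p : R3) : 0 ≤ sqnorm p := by
  unfold sqnorm
  positivity

theorem contDiff_sqnorm {n : WithTop ℕ∞} : ContDiff ℝ n sqnorm := by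
  unfold sqnorm
  fun_prop

theorem isCompact_setOf_sqnorm_le (r : ℝ) : IsCompact {p | sqnorm p ≤ r} := by
  refine (isCompact_Icc (a := ((-√r, -√r, -√r) : R3)) (b := (√r, √r, √r))).of_isClosed_subset
    (isClosed_le (contDiff_sqnorm (n := 0)).continuous continuous_const) fun p hp => ?_
  have hp' : p.1 ^ 2 + p.2.1 ^ 2 + p.2.2 ^ 2 ≤ r := hp
  have h1 := abs_le.1 (Real.abs_le_sqrt (x := p.1) (y := r) (by nlinarith))
  have h2 := abs_le.1 (Real.abs_le_sqrt (x := p.2.1) (y := r) (by nlinarith))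
  have h3 := abs_le.1 (Real.abs_le_sqrt (x := p.2.2) (y := r) (by nlinarith))
  exact ⟨⟨h1.1, h2.1, h3.1⟩, h1.2, h2.2, h3.2⟩

theorem isOpen_ballR (R : ℝ) : IsOpen (ballR R) :=
  isOpen_lt (contDiff_sqnorm (n := 0)).continuous continuous_const

theorem pd_sqnorm (w p : R3) :
    pd sqnorm w p = 2 * (p.1 * w.1 + p.2.1 * w.2.1 + p.2.2 * w.2.2) := by
  have hfst := hasFDerivAt_fst (𝕜 := ℝ) (E := ℝ) (F := ℝ × ℝ) (p := p)
  have hsnd := hasFDerivAt_snd (𝕜 := ℝ) (E := ℝ) (F := ℝ × ℝ) (p := p)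
  have h : HasFDerivAt sqnorm _ p := ((hfst.pow 2).add (hsnd.fst.pow 2)).add (hsnd.snd.pow 2)
  rw [pd, h.fderiv]
  simp only [Nat.add_one_sub_one, pow_one, nsmul_eq_mul, Nat.cast_ofNat, add_apply, smul_apply,
    ContinuousLinearMap.coe_fst', smul_eq_mul, ContinuousLinearMap.comp_apply,
    ContinuousLinearMap.coe_snd']
  ring

theorem pd2_sqnorm (w w' p : R3) :
    pd2 sqnorm w w' p = 2 * (w.1 * w'.1 + w.2.1 * w'.2.1 + w.2.2 * w'.2.2) := by
  let ℓ : R3 →L[ℝ] ℝ := LinearMap.toContinuousLinearMap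
    { toFun := fun q => 2 * (q.1 * w'.1 + q.2.1 * w'.2.1 + q.2.2 * w'.2.2)
      map_add' := fun a b => by simp only [Prod.fst_add, Prod.snd_add]; ring
      map_smul' := fun a b => by
        simp only [Prod.smul_fst, Prod.smul_snd, smul_eq_mul, Real.ringHom_apply]
        ring }
  have hpd : pd sqnorm w' = ℓ := funext fun q => pd_sqnorm w' q
  rw [pd2_eq_pd_pd, hpd, pd, ℓ.fderiv]
  rfl

theorem graphLeviK_comp_sqnorm {g : ℝ → ℝ} {p : R3} (hg : ContDiffAt ℝ 2 g (sqnorm p))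
    (k : R3 → ℝ) :
    GraphLeviK (g ∘ sqnorm) k p =
      4 * deriv g (sqnorm p) * (1 + deriv g (sqnorm p) ^ 2 *
          (2 * (p.1 ^ 2 + p.2.1 ^ 2) + 4 * p.2.2 ^ 2))
        + 4 * deriv (deriv g) (sqnorm p) * (p.1 ^ 2 + p.2.1 ^ 2)
        + k p * (1 + 4 * deriv g (sqnorm p) ^ 2 * sqnorm p) ^ ((3 : ℝ) / 2) := by
  have hpd (w : R3) := pd_comp (hg.differentiableAt two_ne_zero)
    (contDiff_sqnorm.differentiable one_ne_zero p) w
  have hpd2 (w w' : R3) := pd2_comp hg contDiff_sqnorm.contDiffAt w w'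
  have hgrad : 1 + pd (g ∘ sqnorm) e1 p ^ 2 + pd (g ∘ sqnorm) e2 p ^ 2 + pd (g ∘ sqnorm) e3 p ^ 2
      = 1 + 4 * deriv g (sqnorm p) ^ 2 * sqnorm p := by
    simp only [hpd, pd_sqnorm, e1, e2, e3]
    rw [sqnorm]
    ring
  rw [GraphLeviK, hgrad]
  simp only [GraphLevi, hpd, hpd2, pd_sqnorm, pd2_sqnorm, e1, e2, e3]
  ring

end Sqnorm

section LogBarrier

/-- A radial test function on the ball `B(R)`, tending to `-∞` at the boundary, whose Levi curvature
is at least `-5 / R`. It is meaningful only on `ballR R`; elsewhere `Real.log` takes junk values. -/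
def logBarrier (R : ℝ) (p : R3) : ℝ := R * Real.log (R ^ 2 - sqnorm p)

variable {R : ℝ}

theorem contDiffOn_logBarrier {n : WithTop ℕ∞} : ContDiffOn ℝ n (logBarrier R) (ballR R) :=
  contDiffOn_const.mul <| (contDiffOn_const.sub contDiff_sqnorm.contDiffOn).log fun _ hp =>
    (sub_pos.2 hp).ne'

theorem hasDerivAt_mul_log_sub (a : ℝ) {b s : ℝ} (hs : s ≠ b) :
    HasDerivAt (fun s => a * Real.log (b - s)) (-a / (b - s)) s := by
  have h := (((hasDerivAt_id s).const_sub b).log (sub_ne_zero.2 hs.symm)).const_mul a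
  exact h.congr_deriv (by rw [id_eq]; ring)

theorem deriv_deriv_mul_log_sub (a : ℝ) {b s : ℝ} (hs : s ≠ b) :
    deriv (deriv fun s => a * Real.log (b - s)) s = -a / (b - s) ^ 2 := by
  have hderiv : deriv (fun s => a * Real.log (b - s)) =ᶠ[𝓝 s] fun s => -a / (b - s) := by
    filter_upwards [eventually_ne_nhds hs] with r hr using (hasDerivAt_mul_log_sub a hr).deriv
  have h := (hasDerivAt_const s (-a)).div ((hasDerivAt_id s).const_sub b) (sub_ne_zero.2 hs.symm)
  rw [hderiv.deriv_eq]
  exact (h.congr_deriv (by simp)).deriv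

theorem one_add_four_mul_div_sq_mul {s : ℝ} (hs : s ≠ R ^ 2) :
    1 + 4 * (R / (R ^ 2 - s)) ^ 2 * s = ((R ^ 2 + s) / (R ^ 2 - s)) ^ 2 := by
  have ht : R ^ 2 - s ≠ 0 := sub_ne_zero.2 hs.symm
  field_simp
  ring

theorem graphLeviK_logBarrier (k : R3 → ℝ) {p : R3} (hp : p ∈ ballR R) :
    GraphLeviK (logBarrier R) k p =
      k p * ((R ^ 2 + sqnorm p) / (R ^ 2 - sqnorm p)) ^ 3
        - 4 * (R / (R ^ 2 - sqnorm p)) * (1 + (R / (R ^ 2 - sqnorm p)) ^ 2 *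
          (2 * (p.1 ^ 2 + p.2.1 ^ 2) + 4 * p.2.2 ^ 2))
        - 4 * (R / (R ^ 2 - sqnorm p) ^ 2) * (p.1 ^ 2 + p.2.1 ^ 2) := by
  have hlt : sqnorm p < R ^ 2 := hp
  have ht : 0 < R ^ 2 - sqnorm p := sub_pos.2 hlt
  have hq : 0 ≤ (R ^ 2 + sqnorm p) / (R ^ 2 - sqnorm p) :=
    div_nonneg (add_nonneg (sq_nonneg R) (sqnorm_nonneg p)) ht.le
  have hprofile : ContDiffAt ℝ 2 (fun s => R * Real.log (R ^ 2 - s)) (sqnorm p) :=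
    contDiffAt_const.mul ((contDiffAt_const.sub contDiffAt_id).log ht.ne')
  have hgrad : 1 + 4 * (-R / (R ^ 2 - sqnorm p)) ^ 2 * sqnorm p =
      ((R ^ 2 + sqnorm p) / (R ^ 2 - sqnorm p)) ^ 2 := by
    rw [neg_div, neg_sq, one_add_four_mul_div_sq_mul hlt.ne]
  have hpow : (((R ^ 2 + sqnorm p) / (R ^ 2 - sqnorm p)) ^ 2) ^ ((3 : ℝ) / 2) =
      ((R ^ 2 + sqnorm p) / (R ^ 2 - sqnorm p)) ^ 3 := by
    rw [← Real.rpow_natCast_mul hq, ← Real.rpow_natCast]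
    norm_num
  have hlevi : GraphLeviK (logBarrier R) k p = _ := graphLeviK_comp_sqnorm hprofile k
  rw [hlevi, (hasDerivAt_mul_log_sub R hlt.ne).deriv, deriv_deriv_mul_log_sub R hlt.ne,
    hgrad, hpow]
  ring

theorem graphLeviK_logBarrier_nonneg (hR : 0 < R) {p : R3} (hp : p ∈ ballR R) :
    0 ≤ GraphLeviK (logBarrier R) (fun _ => 5 / R) p := by
  rw [graphLeviK_logBarrier _ hp]
  have ht : 0 < R ^ 2 - sqnorm p := sub_pos.2 hp
  have hq_sq := one_add_four_mul_div_sq_mul (ne_of_lt hp)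
  have hs : sqnorm p = p.1 ^ 2 + p.2.1 ^ 2 + p.2.2 ^ 2 := rfl
  have hs_nonneg : 0 ≤ sqnorm p := sqnorm_nonneg p
  set s := sqnorm p
  set t := R ^ 2 - s
  set q := (R ^ 2 + s) / t
  have hq_ge : R ^ 2 / t ≤ q := div_le_div_of_nonneg_right (by linarith) ht.le
  have hq_one : 1 ≤ q := (one_le_div ht).2 (by linarith)
  have hfirst : 4 * (R / t) * (1 + (R / t) ^ 2 * (2 * (p.1 ^ 2 + p.2.1 ^ 2) + 4 * p.2.2 ^ 2))
      ≤ 4 / R * q ^ 3 :=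
    calc _ ≤ 4 * (R / t) * (1 + (R / t) ^ 2 * (4 * s)) := by
          gcongr
          linarith [sq_nonneg p.1, sq_nonneg p.2.1]
      _ = 4 / R * (R ^ 2 / t) * q ^ 2 := by
          rw [← hq_sq]
          field_simp
      _ ≤ 4 / R * q * q ^ 2 := by gcongr
      _ = 4 / R * q ^ 3 := by ring
  have hsecond : 4 * (R / t ^ 2) * (p.1 ^ 2 + p.2.1 ^ 2) ≤ 1 / R * q ^ 3 :=
    calc _ ≤ 4 * (R / t ^ 2) * s := by
          gcongr
          linarith [sq_nonneg p.2.2]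
      _ = 1 / R * (q ^ 2 - 1) := by
          rw [← hq_sq]
          field_simp
          ring
      _ ≤ 1 / R * q ^ 3 := by
          gcongr
          linarith [pow_le_pow_right₀ hq_one (show 2 ≤ 3 by norm_num)]
  linear_combination hfirst + hsecond

theorem exists_isLocalMin_sub_logBarrier (hR : 0 < R) {u : R3 → ℝ}
    (hu : ContinuousOn u {p | sqnorm p ≤ R ^ 2}) :
    ∃ y ∈ ballR R, IsLocalMin (fun x => u x - logBarrier R x) y := by
  -- Unlike `u - logBarrier R = -R log F`, the function `F` is continuous up to the boundary.
  let F : R3 → ℝ := fun x => Real.exp (-u x / R) * (R ^ 2 - sqnorm x)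
  have hF_cont : ContinuousOn F {p | sqnorm p ≤ R ^ 2} :=
    (hu.neg.div_const R).rexp.mul
      (continuousOn_const.sub (contDiff_sqnorm (n := 0)).continuous.continuousOn)
  have hzero : sqnorm 0 = 0 := by simp [sqnorm]
  have hF_boundary : ∀ x ∈ {p | sqnorm p ≤ R ^ 2} \ ballR R, F x < F 0 := by
    rintro x ⟨-, hx⟩
    have hx' : R ^ 2 ≤ sqnorm x := not_lt.1 hx
    calc F x ≤ 0 :=
          mul_nonpos_of_nonneg_of_nonpos (Real.exp_nonneg _) (sub_nonpos.2 hx')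
      _ < F 0 := by
          simp only [F, hzero, sub_zero]
          positivity
  obtain ⟨y, hy, hmax⟩ := (isCompact_setOf_sqnorm_le (R ^ 2)).exists_isLocalMax_mem_open
    (s := ballR R) (fun _ => le_of_lt (α := ℝ)) hF_cont (z := 0) (by simp [hzero, sq_nonneg])
    hF_boundary (isOpen_ballR R)
  have hlog {x : R3} (hx : x ∈ ballR R) : u x - logBarrier R x = -R * Real.log (F x) := by
    rw [Real.log_mul (Real.exp_ne_zero _) (sub_pos.2 hx).ne', Real.log_exp, logBarrier]
    field_simp
    ring
  refine ⟨y, hy, ?_⟩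
  filter_upwards [hmax, (isOpen_ballR R).mem_nhds hy] with x hle hx
  rw [hlog hx, hlog hy]
  have hF_pos : 0 < F x := mul_pos (Real.exp_pos _) (sub_pos.2 hx)
  exact mul_le_mul_of_nonpos_left (Real.log_le_log hF_pos hle) (neg_nonpos.2 hR.le)

end LogBarrier

/-- The second half of `IsWeakGraphLeviSolution`: test functions touching `u` from below satisfy
`𝖫(φ;k) ≤ 0`. The first half is recovered from it by reflection. -/
def IsWeakGraphLeviSupersolution (k : R3 → ℝ) (u : R3 → ℝ) (U : Set R3) : Prop :=
  ∀ y ∈ U, ∀ φ : R3 → ℝ, ContDiff ℝ (⊤ : ℕ∞) φ →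
    IsLocalMin (fun x => u x - φ x) y → GraphLeviK φ k y ≤ 0

namespace IsWeakGraphLeviSupersolution

variable {k u : R3 → ℝ} {U : Set R3}

theorem graphLeviK_nonpos_of_contDiffOn (h : IsWeakGraphLeviSupersolution k u U) {y : R3}
    (hy : y ∈ U) {φ : R3 → ℝ} {s : Set R3} (hs : IsOpen s) (hys : y ∈ s)
    (hφ : ContDiffOn ℝ (⊤ : ℕ∞) φ s) (hmin : IsLocalMin (fun x => u x - φ x) y) :
    GraphLeviK φ k y ≤ 0 := by
  obtain ⟨ψ, hψ, hψφ⟩ := exists_contDiff_eventuallyEq_of_contDiffOn hs hys hφ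
  rw [← graphLeviK_congr hψφ]
  exact h y hy ψ hψ (hmin.congr (EventuallyEq.rfl.fun_sub hψφ.symm))

theorem exists_mem_ballR_le {R : ℝ} (h : IsWeakGraphLeviSupersolution k u (ballR R)) (hR : 0 < R)
    (hu : ContinuousOn u {p | sqnorm p ≤ R ^ 2}) : ∃ y ∈ ballR R, k y ≤ 5 / R := by
  obtain ⟨y, hy, hmin⟩ := exists_isLocalMin_sub_logBarrier hR hu
  refine ⟨y, hy, ?_⟩
  by_contra! hk
  have hpos : 0 < GraphLeviK (logBarrier R) k y :=
    (graphLeviK_logBarrier_nonneg hR hy).trans_lt (graphLeviK_lt_graphLeviK hk _)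
  exact hpos.not_ge
    (h.graphLeviK_nonpos_of_contDiffOn hy (isOpen_ballR R) hy contDiffOn_logBarrier hmin)

theorem const_nonpos {c : ℝ} (h : IsWeakGraphLeviSupersolution (fun _ => c) u Set.univ)
    (hu : Continuous u) : c ≤ 0 := by
  by_contra! hc
  have hR : 0 < 6 / c := by positivity
  obtain ⟨y, -, hle⟩ := exists_mem_ballR_le (fun y _ => h y trivial) hR hu.continuousOn
  rw [div_div_eq_mul_div] at hle
  linarith

end IsWeakGraphLeviSupersolution

section Reflection

/-- The reflection `(x₁, x₂, x₃) ↦ (x₁, x₂, -x₃)`. -/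
def reflectThird : R3 ≃L[ℝ] R3 :=
  (ContinuousLinearEquiv.refl ℝ ℝ).prodCongr
    ((ContinuousLinearEquiv.refl ℝ ℝ).prodCongr (ContinuousLinearEquiv.neg ℝ))

/-- The symmetry `u ↦ ũ`, `ũ(x₁, x₂, x₃) = -u(x₁, x₂, -x₃)`, of the Levi equation, which exchanges
sub- and supersolutions. The curvature function transforms in the same way. -/
def leviReflect (v : R3 → ℝ) (p : R3) : ℝ := -v (reflectThird p)

theorem reflectThird_reflectThird (p : R3) : reflectThird (reflectThird p) = p := by
  simp [reflectThird]

theorem involutive_leviReflect : Function.Involutive leviReflect := fun v => by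
  funext p
  simp [leviReflect, reflectThird_reflectThird]

theorem contDiff_leviReflect {n : WithTop ℕ∞} {v : R3 → ℝ} (hv : ContDiff ℝ n v) :
    ContDiff ℝ n (leviReflect v) :=
  (hv.comp reflectThird.contDiff).neg

theorem pd_neg (v : R3 → ℝ) (w p : R3) : pd v (-w) p = -pd v w p := map_neg _ _

theorem pd_fun_neg (v : R3 → ℝ) (w p : R3) : pd (fun q => -v q) w p = -pd v w p := by
  simp [pd]

theorem pd2_neg_left (v : R3 → ℝ) (w w' p : R3) : pd2 v (-w) w' p = -pd2 v w w' p :=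
  pd_neg _ w p

theorem pd2_neg_right (v : R3 → ℝ) (w w' p : R3) : pd2 v w (-w') p = -pd2 v w w' p := by
  rw [pd2_eq_pd_pd, pd2_eq_pd_pd, funext (pd_neg v w'), pd_fun_neg]

theorem pd_leviReflect (v : R3 → ℝ) (w p : R3) :
    pd (leviReflect v) w p = -pd v (reflectThird w) (reflectThird p) :=
  (pd_fun_neg (v ∘ reflectThird) w p).trans <|
    congrArg Neg.neg <| DFunLike.congr_fun reflectThird.comp_right_fderiv w

theorem pd2_leviReflect (v : R3 → ℝ) (w w' p : R3) :
    pd2 (leviReflect v) w w' p = -pd2 v (reflectThird w) (reflectThird w') (reflectThird p) := by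
  have hpd : pd (leviReflect v) w' = leviReflect (pd v (reflectThird w')) :=
    funext (pd_leviReflect v w')
  rw [pd2_eq_pd_pd, hpd, pd_leviReflect, pd2_eq_pd_pd]

theorem graphLeviK_leviReflect (v k : R3 → ℝ) (p : R3) :
    GraphLeviK (leviReflect v) (leviReflect k) p = -GraphLeviK v k (reflectThird p) := by
  have h1 : reflectThird e1 = e1 := by simp [reflectThird, e1]
  have h2 : reflectThird e2 = e2 := by simp [reflectThird, e2]
  have h3 : reflectThird e3 = -e3 := by simp [reflectThird, e3]
  simp only [GraphLeviK, GraphLevi, pd_leviReflect, pd2_leviReflect, h1, h2, h3, pd_neg,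
    pd2_neg_left, pd2_neg_right, leviReflect, neg_sq, neg_neg]
  ring

theorem isLocalMin_leviReflect_sub_iff {u φ : R3 → ℝ} {p : R3} :
    IsLocalMin (fun x => leviReflect u x - leviReflect φ x) p ↔
      IsLocalMax (fun x => u x - φ x) (reflectThird p) := by
  have hmap : map reflectThird (𝓝 p) = 𝓝 (reflectThird p) :=
    reflectThird.toHomeomorph.map_nhds_eq p
  have hneg (x : R3) : leviReflect u x - leviReflect φ x =
      -(u (reflectThird x) - φ (reflectThird x)) := by
    simp only [leviReflect]
    ring
  simp only [IsLocalMin, IsLocalMax, IsMinFilter, IsMaxFilter, hneg, neg_le_neg_iff, ← hmap,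
    eventually_map]

theorem isWeakGraphLeviSolution_iff {k u : R3 → ℝ} {U : Set R3} :
    IsWeakGraphLeviSolution k u U ↔
      IsWeakGraphLeviSupersolution (leviReflect k) (leviReflect u) (reflectThird ⁻¹' U) ∧
        IsWeakGraphLeviSupersolution k u U := by
  have hcontDiff {φ : R3 → ℝ} :
      ContDiff ℝ (⊤ : ℕ∞) (leviReflect φ) ↔ ContDiff ℝ (⊤ : ℕ∞) φ :=
    ⟨fun h => involutive_leviReflect φ ▸ contDiff_leviReflect h, contDiff_leviReflect⟩
  refine and_congr_left' ?_
  rw [IsWeakGraphLeviSupersolution, reflectThird.surjective.forall]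
  refine forall₂_congr fun y _ => ?_
  refine Iff.trans ?_ involutive_leviReflect.surjective.forall.symm
  simp only [hcontDiff, isLocalMin_leviReflect_sub_iff, graphLeviK_leviReflect, neg_nonpos]

theorem leviReflect_const (c : ℝ) : (leviReflect fun _ => c) = fun _ => -c := rfl

end Reflection

theorem isWeakGraphLeviSupersolution_const (c : ℝ) (U : Set R3) :
    IsWeakGraphLeviSupersolution (fun _ => 0) (fun _ => c) U := by
  intro y _ φ hφ hmin
  have hmax : IsLocalMax φ y := hmin.mono fun _ hx => (sub_le_sub_iff_left c).1 hx
  have hpd2 (w : R3) : pd2 φ w w y ≤ 0 :=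
    fderiv_fderiv_apply_self_nonpos_of_isLocalMax hmax (hφ.of_le (by norm_cast)).contDiffAt w
  calc GraphLeviK φ (fun _ => 0) y = pd2 φ e1 e1 y + pd2 φ e2 e2 y := by
        simp [GraphLeviK, GraphLevi, pd, hmax.fderiv_eq_zero]
    _ ≤ 0 := add_nonpos (hpd2 e1) (hpd2 e2)

theorem isWeakGraphLeviSolution_const (c : ℝ) (U : Set R3) :
    IsWeakGraphLeviSolution (fun _ => 0) (fun _ => c) U := by
  rw [isWeakGraphLeviSolution_iff, leviReflect_const, leviReflect_const, neg_zero]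
  exact ⟨isWeakGraphLeviSupersolution_const _ _, isWeakGraphLeviSupersolution_const _ _⟩

theorem IsWeakGraphLeviSolution.const_eq_zero {c : ℝ} {u : R3 → ℝ}
    (h : IsWeakGraphLeviSolution (fun _ => c) u Set.univ) (hu : Continuous u) : c = 0 := by
  obtain ⟨hreflect, hsuper⟩ := isWeakGraphLeviSolution_iff.1 h
  have hneg : -c ≤ 0 := hreflect.const_nonpos (hu.comp reflectThird.continuous).neg
  exact le_antisymm (hsuper.const_nonpos hu) (neg_nonpos.1 hneg)

theorem LocLipschitzOn.locallyLipschitzOn {u : R3 → ℝ} {U : Set R3} (h : LocLipschitzOn u U) :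
    LocallyLipschitzOn U u := fun p hp =>
  let ⟨C, V, hV, hC⟩ := h p hp
  ⟨C, V ∩ U, inter_mem (mem_nhdsWithin_of_mem_nhds hV) self_mem_nhdsWithin, hC⟩

theorem locLipschitzOn_const (c : ℝ) (U : Set R3) : LocLipschitzOn (fun _ => c) U := fun _ _ =>
  ⟨0, Set.univ, univ_mem, (LipschitzWith.const c).lipschitzOnWith⟩

theorem constant_levi_curvature_solution_iff_general (k : ℝ) :
    (∃ u : R3 → ℝ, Continuous u ∧ IsWeakGraphLeviSolution (fun _ => k) u Set.univ) ↔ k = 0 := by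
  refine ⟨fun ⟨u, hu, h⟩ => h.const_eq_zero hu, ?_⟩
  rintro rfl
  exact ⟨fun _ => 0, continuous_const, isWeakGraphLeviSolution_const 0 _⟩

/-- the equation 𝖫(u;k) = 0 on ℝ³ with constant `k` admits a locally
Lipschitz weak solution if and only if `k = 0`. -/
theorem constant_levi_curvature_solution_iff (k : ℝ) :
    (∃ u : R3 → ℝ, LocLipschitzOn u Set.univ ∧
      IsWeakGraphLeviSolution (fun _ => k) u Set.univ) ↔ k = 0 := by
  refine ⟨fun ⟨u, hu, h⟩ => (constant_levi_curvature_solution_iff_general k).1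
    ⟨u, continuousOn_univ.1 hu.locallyLipschitzOn.continuousOn, h⟩, fun hk => hk ▸
    ⟨fun _ => 0, locLipschitzOn_const 0 _, isWeakGraphLeviSolution_const 0 _⟩⟩

end
end
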